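/- Suppose the pair (A,B), with A ∈ ℝ^{n×n} and B ∈ ℝ^{n×m}, is stabilizable (there exists K ∈ ℝ^{m×n} such that A − B K is Hurwitz) and A has no eigenvalue on the imaginary axis (no complex eigenvalue with zero real part). Then there exists a symmetric positive semidefinite matrix P_0 ∈ ℝ^{n×n} satisfying the algebraic Riccati equation A^T P_0 + P_0 A − P_0 B B^T P_0 = 0 and such that A − B B^T P_0 is Hurwitz. -/

import Mathlib

/-!
For complex matrices, minimize over the positive semidefinite `P` whose Riccati residual
`Aᴴ * P + P * A - P * B * Bᴴ * P` is nonpositive and whose feedback `Bᴴ * P` is stabilizing; the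
Lyapunov equation of any stabilizing feedback has such a solution. Those below a given one form a
compact set: a limit has its closed-loop spectrum in the closed left half-plane, and a closed-loop
eigenvector on the imaginary axis would be killed by the feedback, hence be an eigenvector of `A`.
So a minimal `P` exists. Solving the Lyapunov equation of its own closed loop (the Kleinman
iteration) gives a smaller `Q` for which the Lyapunov operator maps `P - Q` to the residual of `P`,
so minimality forces this residual to vanish. A stabilizing solution of the Riccati equation is
unique, hence invariant under complex conjugation, hence real, when `A` and `B` are real.
-/

open Matrix

/-- A real square matrix is Hurwitz if every eigenvalue of its complexification has strictly
negative real part. -/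
def IsHurwitz {n : ℕ} (M : Matrix (Fin n) (Fin n) ℝ) : Prop :=
  ∀ μ ∈ spectrum ℂ (M.map (algebraMap ℝ ℂ)), μ.re < 0

open Filter Topology
open scoped ComplexOrder MatrixOrder Matrix.Norms.L2Operator

/-- The spectrum lies in the open left half-plane. `IsHurwitz` is the case of the complexification
of a real matrix. -/
def HasStableSpectrum {𝓐 : Type*} [Ring 𝓐] [Algebra ℂ 𝓐] (a : 𝓐) : Prop :=
  ∀ μ ∈ spectrum ℂ a, μ.re < 0

theorem tendsto_pow_atTop_nhds_zero_of_forall_spectrum_norm_lt_one {𝓐 : Type*} [NormedRing 𝓐]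
    [NormedAlgebra ℂ 𝓐] [CompleteSpace 𝓐] {a : 𝓐} (h : ∀ μ ∈ spectrum ℂ a, ‖μ‖ < 1) :
    Tendsto (fun k : ℕ ↦ a ^ k) atTop (𝓝 0) := by
  nontriviality 𝓐
  have hradius : spectralRadius ℂ a < (1 : NNReal) :=
    spectrum.spectralRadius_lt_of_forall_lt a fun μ hμ ↦ mod_cast h μ hμ
  obtain ⟨r, har, hr⟩ := ENNReal.lt_iff_exists_nnreal_btwn.1 hradius
  have hbound : ∀ᶠ k : ℕ in atTop, ‖a ^ k‖ ≤ (r : ℝ) ^ k := by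
    filter_upwards [(spectrum.pow_nnnorm_pow_one_div_tendsto_nhds_spectralRadius a).eventually
      (gt_mem_nhds har), eventually_gt_atTop 0] with k hk hk0
    rw [one_div, ENNReal.rpow_inv_lt_iff (by positivity), ENNReal.rpow_natCast] at hk
    exact mod_cast hk.le
  exact squeeze_zero_norm' hbound
    (tendsto_pow_atTop_nhds_zero_of_lt_one r.2 (by exact_mod_cast hr))

section Cayley

variable {𝓐 : Type*} [Ring 𝓐]

/-- The Cayley transform `(a + 1) / (a - 1)`, which carries continuous-time stability (spectrum in
the left half-plane) to discrete-time stability (spectrum in the unit disc). `Ring.inverse` makes it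
`0` when `a - 1` is not a unit. -/
noncomputable def cayley (a : 𝓐) : 𝓐 := (a + 1) * Ring.inverse (a - 1)

theorem cayley_mul_sub_one {a : 𝓐} (ha : IsUnit (a - 1)) : cayley a * (a - 1) = a + 1 := by
  rw [cayley, mul_assoc, Ring.inverse_mul_cancel _ ha, mul_one]

theorem star_cayley_mul_mul_cayley_sub [StarRing 𝓐] {a : 𝓐} (ha : IsUnit (a - 1)) (x : 𝓐) :
    star (cayley a) * x * cayley a - x =
      2 • (star (Ring.inverse (a - 1)) * (star a * x + x * a) * Ring.inverse (a - 1)) := by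
  set r := Ring.inverse (a - 1)
  have hr : (a - 1) * r = 1 := Ring.mul_inverse_cancel _ ha
  calc
    star (cayley a) * x * cayley a - x
      = star ((a + 1) * r) * x * ((a + 1) * r) - star ((a - 1) * r) * x * ((a - 1) * r) := by
        rw [hr, star_one, one_mul, mul_one]; rfl
    _ = 2 • (star r * (star a * x + x * a) * r) := by
        simp only [star_mul, star_add, star_sub, star_one]; noncomm_ring

-- At `z = 1` both sides are `0`, by division by zero.
theorem re_add_one_div_sub_one (z : ℂ) :
    ((z + 1) / (z - 1)).re = (‖z‖ ^ 2 - 1) / ‖z - 1‖ ^ 2 := by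
  simp only [Complex.div_re, ← Complex.normSq_eq_norm_sq, ← add_div]
  congr 1
  simp only [Complex.normSq_apply, Complex.add_re, Complex.add_im, Complex.sub_re, Complex.sub_im,
    Complex.one_re, Complex.one_im, add_zero, sub_zero]
  ring

variable [Algebra ℂ 𝓐] {a : 𝓐}

theorem HasStableSpectrum.isUnit_sub_one (ha : HasStableSpectrum a) : IsUnit (a - 1) := by
  have h : (1 : ℂ) ∉ spectrum ℂ a := fun h ↦ (ha 1 h).not_ge zero_le_one
  simpa using (spectrum.notMem_iff.1 h).neg

theorem ne_one_and_div_mem_spectrum_of_mem_spectrum_cayley (ha : IsUnit (a - 1)) {μ : ℂ}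
    (hμ : μ ∈ spectrum ℂ (cayley a)) : μ ≠ 1 ∧ (μ + 1) / (μ - 1) ∈ spectrum ℂ a := by
  have hfactor : (algebraMap ℂ 𝓐 μ - cayley a) * (a - 1) =
      (μ - 1) • a - algebraMap ℂ 𝓐 (μ + 1) := by
    rw [sub_mul, cayley_mul_sub_one ha]
    simp only [Algebra.algebraMap_eq_smul_one, mul_sub, sub_smul, add_smul, smul_mul_assoc,
      one_mul, one_smul, mul_one]
    abel
  have hnonunit : ¬ IsUnit ((μ - 1) • a - algebraMap ℂ 𝓐 (μ + 1)) := by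
    rwa [← hfactor, IsUnit.mul_right_iff ha]
  have hμ1 : μ - 1 ≠ 0 := fun h ↦ hnonunit <| by
    rw [h, zero_smul, zero_sub, sub_eq_zero.1 h]
    exact ((IsUnit.mk0 (1 + 1 : ℂ) (by norm_num)).map (algebraMap ℂ 𝓐)).neg
  refine ⟨sub_ne_zero.1 hμ1, fun hunit ↦ hnonunit ?_⟩
  convert hunit.neg.smul (Units.mk0 _ hμ1) using 1
  simp [Algebra.algebraMap_eq_smul_one, Units.smul_def, smul_sub, smul_smul, mul_div_cancel₀ _ hμ1]

theorem HasStableSpectrum.norm_lt_one_of_mem_spectrum_cayley (ha : HasStableSpectrum a) {μ : ℂ}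
    (hμ : μ ∈ spectrum ℂ (cayley a)) : ‖μ‖ < 1 := by
  obtain ⟨hμ1, hz⟩ := ne_one_and_div_mem_spectrum_of_mem_spectrum_cayley ha.isUnit_sub_one hμ
  have hre := ha _ hz
  have hpos : 0 < ‖μ - 1‖ ^ 2 := pow_pos (norm_pos_iff.2 (sub_ne_zero.2 hμ1)) 2
  rw [re_add_one_div_sub_one, div_lt_iff₀ hpos, zero_mul, sub_neg] at hre
  exact (sq_lt_one_iff₀ (norm_nonneg μ)).1 hre

end Cayley

section CStar

variable {𝓐 : Type*} [CStarAlgebra 𝓐] {a : 𝓐}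

theorem tendsto_star_pow_mul_mul_pow {c : 𝓐} (hc : Tendsto (fun k : ℕ ↦ c ^ k) atTop (𝓝 0))
    (x : 𝓐) : Tendsto (fun k : ℕ ↦ star (c ^ k) * x * c ^ k) atTop (𝓝 0) := by
  simpa using (hc.star.mul_const x).mul hc

theorem HasStableSpectrum.tendsto_cayley_pow (ha : HasStableSpectrum a) :
    Tendsto (fun k : ℕ ↦ cayley a ^ k) atTop (𝓝 0) :=
  tendsto_pow_atTop_nhds_zero_of_forall_spectrum_norm_lt_one
    fun _ ↦ ha.norm_lt_one_of_mem_spectrum_cayley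

theorem HasStableSpectrum.eq_zero_of_lyapunov_eq_zero (ha : HasStableSpectrum a) {x : 𝓐}
    (h : star a * x + x * a = 0) : x = 0 := by
  have hstein : star (cayley a) * x * cayley a = x := by
    simpa [h, sub_eq_zero] using star_cayley_mul_mul_cayley_sub ha.isUnit_sub_one x
  have hpow (k : ℕ) : star (cayley a ^ k) * x * cayley a ^ k = x := by
    induction k with
    | zero => simp
    | succ k ih =>
      calc _ = star (cayley a ^ k) * (star (cayley a) * x * cayley a) * cayley a ^ k := by
            simp only [pow_succ', star_mul, mul_assoc]
        _ = x := by rw [hstein, ih]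
  have hlim := tendsto_star_pow_mul_mul_pow ha.tendsto_cayley_pow x
  simp only [hpow] at hlim
  exact tendsto_nhds_unique tendsto_const_nhds hlim

variable [PartialOrder 𝓐] [StarOrderedRing 𝓐]

theorem HasStableSpectrum.nonneg_of_lyapunov_nonpos (ha : HasStableSpectrum a) {x : 𝓐}
    (h : star a * x + x * a ≤ 0) : 0 ≤ x := by
  have hstein : star (cayley a) * x * cayley a ≤ x := by
    rw [← sub_nonpos, star_cayley_mul_mul_cayley_sub ha.isUnit_sub_one]
    exact nsmul_nonpos (by simpa using star_left_conjugate_le_conjugate h (Ring.inverse (a - 1))) 2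
  have hpow (k : ℕ) : star (cayley a ^ k) * x * cayley a ^ k ≤ x := by
    induction k with
    | zero => simp
    | succ k ih =>
      calc _ = star (cayley a ^ k) * (star (cayley a) * x * cayley a) * cayley a ^ k := by
            simp only [pow_succ', star_mul, mul_assoc]
        _ ≤ star (cayley a ^ k) * x * cayley a ^ k := star_left_conjugate_le_conjugate hstein _
        _ ≤ x := ih
  exact le_of_tendsto' (tendsto_star_pow_mul_mul_pow ha.tendsto_cayley_pow x) hpow

theorem HasStableSpectrum.exists_nonneg_lyapunov_eq_neg [FiniteDimensional ℂ 𝓐]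
    (ha : HasStableSpectrum a) {q : 𝓐} (hq : 0 ≤ q) :
    ∃ x, 0 ≤ x ∧ star a * x + x * a = -q := by
  let L : 𝓐 →ₗ[ℂ] 𝓐 := LinearMap.mulLeft ℂ (star a) + LinearMap.mulRight ℂ a
  have hL : Function.Injective L :=
    (injective_iff_map_eq_zero L).2 fun _ ↦ ha.eq_zero_of_lyapunov_eq_zero
  obtain ⟨x, hx⟩ := LinearMap.injective_iff_surjective.1 hL (-q)
  replace hx : star a * x + x * a = -q := hx
  exact ⟨x, ha.nonneg_of_lyapunov_nonpos (by simpa [hx] using hq), hx⟩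

theorem isCompact_Icc_of_finiteDimensional [FiniteDimensional ℂ 𝓐] (a b : 𝓐) :
    IsCompact (Set.Icc a b) := by
  have := FiniteDimensional.proper ℂ 𝓐
  refine (isCompact_closedBall a ‖b - a‖).of_isClosed_subset isClosed_Icc fun x hx ↦ ?_
  rw [mem_closedBall_iff_norm]
  exact CStarAlgebra.norm_le_norm_of_nonneg_of_le (sub_nonneg.2 hx.1) (sub_le_sub_right hx.2 a)

end CStar

theorem exists_minimal_of_isCompact {ι : Type*} [Finite ι] {S : Set (Matrix ι ι ℂ)}
    (hS : IsCompact S) (hne : S.Nonempty) : ∃ P, Minimal (· ∈ S) P := by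
  cases nonempty_fintype ι
  obtain ⟨P, hPS, hmin⟩ := hS.exists_isMinOn hne (f := fun Q ↦ Q.trace.re) (by fun_prop)
  refine ⟨P, hPS, fun Q hQS hQP ↦ ?_⟩
  have hdiff : (P - Q).PosSemidef := hQP
  have htrace : (P - Q).trace = 0 := by
    have him := Complex.nonneg_iff.1 hdiff.trace_nonneg
    have hre : P.trace.re ≤ Q.trace.re := hmin hQS
    refine Complex.ext (le_antisymm ?_ him.1) him.2.symm
    simpa using hre
  exact (sub_eq_zero.1 (hdiff.trace_eq_zero_iff.1 htrace)).le

section Matrix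

variable {ι κ : Type*} [Fintype ι] [Fintype κ]

theorem mulVec_eq_zero_of_lyapunov_le {M P : Matrix ι ι ℂ} {G : Matrix κ ι ℂ} (hP : 0 ≤ P)
    (h : Mᴴ * P + P * M ≤ -(Gᴴ * G)) {μ : ℂ} (hμ : 0 ≤ μ.re) {v : ι → ℂ} (hv : M *ᵥ v = μ • v) :
    G *ᵥ v = 0 := by
  have hform : star v ⬝ᵥ (Mᴴ * P + P * M) *ᵥ v = (2 * μ.re : ℝ) * (star v ⬝ᵥ P *ᵥ v) := by
    calc star v ⬝ᵥ (Mᴴ * P + P * M) *ᵥ v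
        = star (M *ᵥ v) ⬝ᵥ P *ᵥ v + star v ⬝ᵥ P *ᵥ (M *ᵥ v) := by
          simp only [add_mulVec, dotProduct_add, star_mulVec, ← mulVec_mulVec, dotProduct_mulVec,
            vecMul_vecMul]
      _ = (μ + star μ) * (star v ⬝ᵥ P *ᵥ v) := by
          simp only [hv, star_smul, smul_dotProduct, mulVec_smul, dotProduct_smul, smul_eq_mul]
          ring
      _ = (2 * μ.re : ℝ) * (star v ⬝ᵥ P *ᵥ v) := by
          rw [← starRingEnd_apply, Complex.add_conj]
  have hnonneg : 0 ≤ (2 * μ.re : ℝ) * (star v ⬝ᵥ P *ᵥ v) :=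
    mul_nonneg (Complex.zero_le_real.2 (by positivity)) (hP.posSemidef.dotProduct_mulVec_nonneg v)
  have hneg : (2 * μ.re : ℝ) * (star v ⬝ᵥ P *ᵥ v) ≤ -(star (G *ᵥ v) ⬝ᵥ G *ᵥ v) := by
    have := (Matrix.le_iff.1 h).dotProduct_mulVec_nonneg v
    rwa [sub_mulVec, dotProduct_sub, hform, neg_mulVec, dotProduct_neg, ← mulVec_mulVec,
      dotProduct_mulVec, ← star_mulVec, sub_nonneg] at this
  exact dotProduct_star_self_eq_zero.1 <|
    (neg_nonneg.1 (hnonneg.trans hneg)).antisymm (dotProduct_star_self_nonneg _)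

variable [DecidableEq ι]

theorem mem_spectrum_iff_exists_mulVec_eq_smul {𝕜 : Type*} [Field 𝕜] {M : Matrix ι ι 𝕜} {μ : 𝕜} :
    μ ∈ spectrum 𝕜 M ↔ ∃ v ≠ 0, M *ᵥ v = μ • v := by
  rw [spectrum.mem_iff, Matrix.isUnit_iff_isUnit_det, isUnit_iff_ne_zero, not_not,
    ← Matrix.exists_mulVec_eq_zero_iff]
  simp [sub_mulVec, sub_eq_zero, Algebra.algebraMap_eq_smul_one, smul_mulVec, eq_comm]

theorem pow_re_le_norm_det {M : Matrix ι ι ℂ} (hM : ∀ μ ∈ spectrum ℂ M, μ.re ≤ 0) {z : ℂ}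
    (hz : 0 ≤ z.re) : z.re ^ Fintype.card ι ≤ ‖(Matrix.scalar ι z - M).det‖ := by
  have hsplits := IsAlgClosed.splits M.charpoly
  have hcard : M.charpoly.roots.card = Fintype.card ι := by
    rw [← hsplits.natDegree_eq_card_roots, M.charpoly_natDegree_eq_dim]
  have hdet : ‖(Matrix.scalar ι z - M).det‖ = (M.charpoly.roots.map fun r ↦ ‖z - r‖).prod := by
    rw [← Matrix.eval_charpoly, hsplits.eval_eq_prod_roots_of_monic M.charpoly_monic]
    exact (Multiset.prod_hom' _ (normHom (α := ℂ)) _).symm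
  rw [hdet, ← hcard, ← Multiset.prod_replicate, ← Multiset.map_const']
  refine Multiset.prod_map_le_prod_map₀ _ _ (fun _ _ ↦ hz) fun r hr ↦ ?_
  have hre : r.re ≤ 0 :=
    hM r (Matrix.mem_spectrum_iff_isRoot_charpoly.2 (Polynomial.isRoot_of_mem_roots hr))
  calc z.re ≤ (z - r).re := by simpa using hre
    _ ≤ ‖z - r‖ := Complex.re_le_norm _

theorem isClosed_setOf_forall_spectrum_re_nonpos :
    IsClosed {M : Matrix ι ι ℂ | ∀ μ ∈ spectrum ℂ M, μ.re ≤ 0} := by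
  -- Unlike the spectrum, the determinant is visibly continuous in `M`.
  have heq : {M : Matrix ι ι ℂ | ∀ μ ∈ spectrum ℂ M, μ.re ≤ 0} =
      ⋂ z : ℂ, ⋂ _ : 0 < z.re, {M | z.re ^ Fintype.card ι ≤ ‖(Matrix.scalar ι z - M).det‖} := by
    ext M
    simp only [Set.mem_ofPred_eq, Set.mem_iInter]
    refine ⟨fun hM z hz ↦ pow_re_le_norm_det hM hz.le, fun hdet μ hμ ↦ ?_⟩
    by_contra! hpos
    have := hdet μ hpos
    rw [← Matrix.eval_charpoly, Matrix.mem_spectrum_iff_isRoot_charpoly.1 hμ, norm_zero] at this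
    exact this.not_gt (pow_pos hpos _)
  rw [heq]
  refine isClosed_iInter fun z ↦ isClosed_iInter fun _ ↦ isClosed_le ?_ ?_ <;> fun_prop

end Matrix

section Riccati

variable {ι κ : Type*} [Fintype ι] [Fintype κ]

/-- The Riccati residual `Aᴴ P + P A - P B Bᴴ P`, for an identity control weight and a zero state
weight. -/
def riccati {R : Type*} [Ring R] [StarRing R] (A : Matrix ι ι R) (B : Matrix ι κ R)
    (P : Matrix ι ι R) : Matrix ι ι R :=
  Aᴴ * P + P * A - P * B * Bᴴ * P

theorem closedLoop_lyapunov_eq {R : Type*} [Ring R] [StarRing R] (A : Matrix ι ι R)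
    (B : Matrix ι κ R) (K : Matrix κ ι R) {P : Matrix ι ι R} (hP : P.IsHermitian) :
    (A - B * K)ᴴ * P + P * (A - B * K) =
      riccati A B P + (K - Bᴴ * P)ᴴ * (K - Bᴴ * P) - Kᴴ * K := by
  simp only [riccati, conjTranspose_sub, conjTranspose_mul, conjTranspose_conjTranspose, hP.eq,
    Matrix.sub_mul, Matrix.mul_sub, Matrix.mul_assoc]
  abel

theorem optimalLoop_lyapunov_eq {R : Type*} [Ring R] [StarRing R] (A : Matrix ι ι R)
    (B : Matrix ι κ R) {P : Matrix ι ι R} (hP : P.IsHermitian) :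
    (A - B * (Bᴴ * P))ᴴ * P + P * (A - B * (Bᴴ * P)) =
      riccati A B P - (Bᴴ * P)ᴴ * (Bᴴ * P) := by
  simpa using closedLoop_lyapunov_eq A B (Bᴴ * P) hP

variable [DecidableEq ι] {A : Matrix ι ι ℂ} {B : Matrix ι κ ℂ} {K : Matrix κ ι ℂ}
  {P Q : Matrix ι ι ℂ}

/-- The stabilizing solutions `P ≥ 0` of the Riccati inequality: the feedback `Bᴴ P` stabilizes
`(A, B)`. The Riccati equation is solved by a minimal one. -/
structure IsStabilizingSupersolution (A : Matrix ι ι ℂ) (B : Matrix ι κ ℂ) (P : Matrix ι ι ℂ) :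
    Prop where
  nonneg : 0 ≤ P
  riccati_nonpos : riccati A B P ≤ 0
  hasStableSpectrum : HasStableSpectrum (A - B * (Bᴴ * P))

theorem IsStabilizingSupersolution.of_lyapunov_eq (hK : HasStableSpectrum (A - B * K))
    (hP : 0 ≤ P) (h : (A - B * K)ᴴ * P + P * (A - B * K) = -(Kᴴ * K)) :
    IsStabilizingSupersolution A B P := by
  have hPherm : P.IsHermitian := hP.posSemidef.isHermitian
  have hriccati : riccati A B P = -((K - Bᴴ * P)ᴴ * (K - Bᴴ * P)) := by
    rw [closedLoop_lyapunov_eq A B K hPherm] at h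
    exact eq_neg_of_add_eq_zero_left (by simpa [sub_eq_neg_add] using h)
  have hgap_nonneg := (posSemidef_conjTranspose_mul_self (K - Bᴴ * P)).nonneg
  refine ⟨hP, by simpa only [hriccati, neg_nonpos] using hgap_nonneg, fun μ hμ ↦ ?_⟩
  by_contra! hre
  obtain ⟨v, hv0, hv⟩ := mem_spectrum_iff_exists_mulVec_eq_smul.1 hμ
  have hgap : (K - Bᴴ * P) *ᵥ v = 0 := by
    refine mulVec_eq_zero_of_lyapunov_le hP ?_ hre hv
    rw [optimalLoop_lyapunov_eq A B hPherm, hriccati]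
    exact sub_le_self _ (posSemidef_conjTranspose_mul_self _).nonneg
  refine (hK μ (mem_spectrum_iff_exists_mulVec_eq_smul.2 ⟨v, hv0, ?_⟩)).not_ge hre
  calc (A - B * K) *ᵥ v = (A - B * (Bᴴ * P)) *ᵥ v - B *ᵥ ((K - Bᴴ * P) *ᵥ v) := by
        rw [mulVec_mulVec, ← sub_mulVec, Matrix.mul_sub]; abel_nf
    _ = μ • v := by rw [hgap, mulVec_zero, sub_zero, hv]

theorem exists_isStabilizingSupersolution_lyapunov_eq (hK : HasStableSpectrum (A - B * K)) :
    ∃ P, IsStabilizingSupersolution A B P ∧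
      (A - B * K)ᴴ * P + P * (A - B * K) = -(Kᴴ * K) :=
  let ⟨P, hP, h⟩ := hK.exists_nonneg_lyapunov_eq_neg (posSemidef_conjTranspose_mul_self K).nonneg
  ⟨P, .of_lyapunov_eq hK hP h, h⟩

theorem riccati_eq_zero_of_minimal (h : Minimal (IsStabilizingSupersolution A B) P) :
    riccati A B P = 0 := by
  obtain ⟨Q, hQ, hlyap⟩ := exists_isStabilizingSupersolution_lyapunov_eq h.prop.hasStableSpectrum
  have hdiff : (A - B * (Bᴴ * P))ᴴ * (P - Q) + (P - Q) * (A - B * (Bᴴ * P)) = riccati A B P := by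
    rw [Matrix.mul_sub, Matrix.sub_mul, sub_add_sub_comm, hlyap,
      optimalLoop_lyapunov_eq A B h.prop.nonneg.posSemidef.isHermitian, sub_neg_eq_add,
      sub_add_cancel]
  have hQP : Q ≤ P := sub_nonneg.1 <| h.prop.hasStableSpectrum.nonneg_of_lyapunov_nonpos <|
    hdiff.trans_le h.prop.riccati_nonpos
  rw [← hdiff, h.eq_of_le hQ hQP]
  simp

theorem isStabilizingSupersolution_iff (hA : ∀ μ ∈ spectrum ℂ A, μ.re ≠ 0) :
    IsStabilizingSupersolution A B P ↔ 0 ≤ P ∧ riccati A B P ≤ 0 ∧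
      ∀ μ ∈ spectrum ℂ (A - B * (Bᴴ * P)), μ.re ≤ 0 := by
  refine ⟨fun h ↦ ⟨h.nonneg, h.riccati_nonpos, fun μ hμ ↦ (h.hasStableSpectrum μ hμ).le⟩,
    fun ⟨hP, hriccati, hre⟩ ↦ ⟨hP, hriccati, fun μ hμ ↦ (hre μ hμ).lt_of_ne fun hzero ↦ ?_⟩⟩
  obtain ⟨v, hv0, hv⟩ := mem_spectrum_iff_exists_mulVec_eq_smul.1 hμ
  have hfeedback : (Bᴴ * P) *ᵥ v = 0 := by
    refine mulVec_eq_zero_of_lyapunov_le hP ?_ hzero.ge hv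
    rw [optimalLoop_lyapunov_eq A B hP.posSemidef.isHermitian, sub_eq_add_neg]
    exact add_le_of_nonpos_left hriccati
  refine hA μ (mem_spectrum_iff_exists_mulVec_eq_smul.2 ⟨v, hv0, ?_⟩) hzero
  rwa [sub_mulVec, ← mulVec_mulVec, hfeedback, mulVec_zero, sub_zero] at hv

theorem isClosed_setOf_isStabilizingSupersolution (hA : ∀ μ ∈ spectrum ℂ A, μ.re ≠ 0) :
    IsClosed {P | IsStabilizingSupersolution A B P} := by
  simp only [isStabilizingSupersolution_iff hA]
  refine IsClosed.inter (isClosed_le continuous_const continuous_id) <|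
    IsClosed.inter (isClosed_le (f := riccati A B) ?_ continuous_const) <|
      isClosed_setOf_forall_spectrum_re_nonpos.preimage (f := fun P ↦ A - B * (Bᴴ * P)) ?_
  · unfold riccati
    fun_prop
  · fun_prop

theorem exists_minimal_isStabilizingSupersolution (hA : ∀ μ ∈ spectrum ℂ A, μ.re ≠ 0)
    (hQ : IsStabilizingSupersolution A B Q) : ∃ P, Minimal (IsStabilizingSupersolution A B) P := by
  obtain ⟨P, hP⟩ := exists_minimal_of_isCompact
    ((isCompact_Icc_of_finiteDimensional 0 Q).inter_right
      (isClosed_setOf_isStabilizingSupersolution hA)) ⟨Q, ⟨hQ.nonneg, le_rfl⟩, hQ⟩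
  exact ⟨P, hP.prop.2, fun P' hP' hle ↦
    hP.le_of_le ⟨⟨hP'.nonneg, hle.trans hP.prop.1.2⟩, hP'⟩ hle⟩

theorem le_of_riccati_eq_zero (hP : P.IsHermitian) (hQ : Q.IsHermitian)
    (hPric : riccati A B P = 0) (hQric : riccati A B Q = 0)
    (hstable : HasStableSpectrum (A - B * (Bᴴ * P))) : Q ≤ P := by
  refine sub_nonneg.1 (hstable.nonneg_of_lyapunov_nonpos ?_)
  rw [star_eq_conjTranspose, Matrix.mul_sub, Matrix.sub_mul, sub_add_sub_comm,
    optimalLoop_lyapunov_eq A B hP, closedLoop_lyapunov_eq A B _ hQ, hPric, hQric]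
  simpa using (posSemidef_conjTranspose_mul_self (Bᴴ * P - Bᴴ * Q)).nonneg

theorem exists_posSemidef_riccati_eq_zero_hasStableSpectrum (hA : ∀ μ ∈ spectrum ℂ A, μ.re ≠ 0)
    (hK : HasStableSpectrum (A - B * K)) :
    ∃ P : Matrix ι ι ℂ, P.PosSemidef ∧ riccati A B P = 0 ∧
      HasStableSpectrum (A - B * (Bᴴ * P)) := by
  obtain ⟨Q, hQ, -⟩ := exists_isStabilizingSupersolution_lyapunov_eq hK
  obtain ⟨P, hP⟩ := exists_minimal_isStabilizingSupersolution hA hQ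
  exact ⟨P, hP.prop.nonneg.posSemidef, riccati_eq_zero_of_minimal hP, hP.prop.hasStableSpectrum⟩

end Riccati

theorem posSemidef_of_map_algebraMap {ι : Type*} [Finite ι] {P : Matrix ι ι ℝ}
    (hP : (P.map (algebraMap ℝ ℂ)).PosSemidef) : P.PosSemidef := by
  cases nonempty_fintype ι
  refine .of_dotProduct_mulVec_nonneg (Matrix.ext fun i j ↦ ?_) fun x ↦ ?_
  · simpa using congrFun₂ hP.isHermitian i j
  · have hquad : star (algebraMap ℝ ℂ ∘ x) ⬝ᵥ P.map (algebraMap ℝ ℂ) *ᵥ (algebraMap ℝ ℂ ∘ x) =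
        algebraMap ℝ ℂ (star x ⬝ᵥ P *ᵥ x) := by
      simp [dotProduct, mulVec]
    have hnonneg := hP.dotProduct_mulVec_nonneg (algebraMap ℝ ℂ ∘ x)
    rw [hquad] at hnonneg
    exact Complex.zero_le_real.1 hnonneg

section Real

variable {ι κ : Type*} [Fintype ι] [Fintype κ]

theorem riccati_map {R S : Type*} [Ring R] [StarRing R] [Ring S] [StarRing S] (f : R →+* S)
    (hf : Function.Semiconj f star star) (A : Matrix ι ι R) (B : Matrix ι κ R)
    (P : Matrix ι ι R) :
    riccati (A.map f) (B.map f) (P.map f) = (riccati A B P).map f := by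
  simp only [riccati, Matrix.map_sub f (map_sub f), Matrix.map_add f (map_add f), Matrix.map_mul,
    conjTranspose_map f hf]

theorem optimalLoop_map {R S : Type*} [Ring R] [StarRing R] [Ring S] [StarRing S] (f : R →+* S)
    (hf : Function.Semiconj f star star) (A : Matrix ι ι R) (B : Matrix ι κ R)
    (P : Matrix ι ι R) :
    A.map f - B.map f * ((B.map f)ᴴ * P.map f) = (A - B * (Bᴴ * P)).map f := by
  simp only [Matrix.map_sub f (map_sub f), Matrix.map_mul, conjTranspose_map f hf]

variable [DecidableEq ι]

theorem HasStableSpectrum.map_conj {M : Matrix ι ι ℂ} (hM : HasStableSpectrum M) :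
    HasStableSpectrum (M.map (starRingEnd ℂ)) := by
  intro μ hμ
  rw [← Complex.conj_re]
  refine hM _ fun hunit ↦ hμ ?_
  have hmap : (starRingEnd ℂ).mapMatrix (algebraMap ℂ (Matrix ι ι ℂ) (starRingEnd ℂ μ) - M) =
      algebraMap ℂ (Matrix ι ι ℂ) μ - M.map (starRingEnd ℂ) := by
    ext i j
    simp [Matrix.algebraMap_matrix_apply, apply_ite]
  have hunit' := hunit.map (starRingEnd ℂ).mapMatrix
  rwa [hmap] at hunit'

theorem exists_map_algebraMap_eq_of_riccati_eq_zero {A : Matrix ι ι ℝ} {B : Matrix ι κ ℝ}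
    {P : Matrix ι ι ℂ} (hP : P.IsHermitian)
    (hriccati : riccati (A.map (algebraMap ℝ ℂ)) (B.map (algebraMap ℝ ℂ)) P = 0)
    (hstable : HasStableSpectrum (A.map (algebraMap ℝ ℂ) -
      B.map (algebraMap ℝ ℂ) * ((B.map (algebraMap ℝ ℂ))ᴴ * P))) :
    ∃ P₀ : Matrix ι ι ℝ, P₀.map (algebraMap ℝ ℂ) = P := by
  set A' := A.map (algebraMap ℝ ℂ)
  set B' := B.map (algebraMap ℝ ℂ)
  have hA : A'.map (starRingEnd ℂ) = A' := by ext; simp [A']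
  have hB : B'.map (starRingEnd ℂ) = B' := by ext; simp [B']
  have hstar : Function.Semiconj (starRingEnd ℂ) star star := fun _ ↦ rfl
  have hP' : (P.map (starRingEnd ℂ)).IsHermitian := hP.map _ hstar
  have hriccati' : riccati A' B' (P.map (starRingEnd ℂ)) = 0 := by
    rw [← Matrix.map_zero (starRingEnd ℂ) (map_zero _), ← hriccati, ← riccati_map _ hstar, hA, hB]
  have hstable' : HasStableSpectrum (A' - B' * (B'ᴴ * P.map (starRingEnd ℂ))) := by
    have := hstable.map_conj
    rwa [← optimalLoop_map _ hstar, hA, hB] at this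
  have hreal : P.map (starRingEnd ℂ) = P :=
    (le_of_riccati_eq_zero hP hP' hriccati hriccati' hstable).antisymm
      (le_of_riccati_eq_zero hP' hP hriccati' hriccati hstable')
  exact ⟨P.map Complex.re, Matrix.ext fun i j ↦ Complex.conj_eq_iff_re.1 (congrFun₂ hreal i j)⟩

theorem algebraic_riccati_stabilizing_solution_general (A : Matrix ι ι ℝ) (B : Matrix ι κ ℝ)
    (hstab : ∃ K : Matrix κ ι ℝ, HasStableSpectrum ((A - B * K).map (algebraMap ℝ ℂ)))
    (himag : ∀ μ ∈ spectrum ℂ (A.map (algebraMap ℝ ℂ)), μ.re ≠ 0) :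
    ∃ P₀ : Matrix ι ι ℝ, P₀.PosSemidef ∧ Aᵀ * P₀ + P₀ * A - P₀ * B * Bᵀ * P₀ = 0 ∧
      HasStableSpectrum ((A - B * Bᵀ * P₀).map (algebraMap ℝ ℂ)) := by
  obtain ⟨K, hK⟩ := hstab
  rw [Matrix.map_sub _ (map_sub _), Matrix.map_mul] at hK
  obtain ⟨P, hP, hriccati, hstable⟩ :=
    exists_posSemidef_riccati_eq_zero_hasStableSpectrum himag hK
  obtain ⟨P₀, rfl⟩ := exists_map_algebraMap_eq_of_riccati_eq_zero hP.isHermitian hriccati hstable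
  have hstar : Function.Semiconj (algebraMap ℝ ℂ) star star := fun x ↦ (Complex.conj_ofReal x).symm
  have hriccati₀ : riccati A B P₀ = 0 := by
    refine Matrix.map_injective (algebraMap ℝ ℂ).injective ?_
    exact ((riccati_map _ hstar A B P₀).symm.trans hriccati).trans
      (Matrix.map_zero _ (map_zero _)).symm
  rw [optimalLoop_map _ hstar, ← Matrix.mul_assoc B] at hstable
  exact ⟨P₀, posSemidef_of_map_algebraMap hP, hriccati₀, hstable⟩

end Real

/-- If `(A, B)` is stabilizable and `A` has no eigenvalue on the imaginary
axis, then there exists a symmetric positive semidefinite `P₀` solving the algebraic Riccati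
equation `Aᵀ P₀ + P₀ A − P₀ B Bᵀ P₀ = 0` with `A − B Bᵀ P₀` Hurwitz. -/
theorem algebraic_riccati_stabilizing_solution {n m : ℕ}
    (A : Matrix (Fin n) (Fin n) ℝ) (B : Matrix (Fin n) (Fin m) ℝ)
    (hstab : ∃ K : Matrix (Fin m) (Fin n) ℝ, IsHurwitz (A - B * K))
    (himag : ∀ μ ∈ spectrum ℂ (A.map (algebraMap ℝ ℂ)), μ.re ≠ 0) :
    ∃ P₀ : Matrix (Fin n) (Fin n) ℝ, P₀.PosSemidef ∧
      Aᵀ * P₀ + P₀ * A - P₀ * B * Bᵀ * P₀ = 0 ∧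
      IsHurwitz (A - B * Bᵀ * P₀) :=
  algebraic_riccati_stabilizing_solution_general A B hstab himag
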